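/- arXiv:2110.06418 — 4 statements merged into one kernel-verified Lean document; each statement's English description precedes it below -/
import Mathlib

section
/- Suppose Q + KᵀRK ⪰ I and √γ·(A+BK) is stable with Lyapunov solution P = P_{K,γ}. Fix a constant c ≥ 1 and an integer H ≥ 4c, and define the finite-horizon value matrix P_H := Σ_{t=0}^{H−1} γ^t ((A+BK)^t)ᵀ (Q + KᵀRK) (A+BK)^t. Then tr(P_H) ≥ min( tr(P)/2, c ). -/
open Matrix

/-- A real square matrix is stable if every complex eigenvalue has modulus `< 1`. -/
def IsStable {n : ℕ} (M : Matrix (Fin n) (Fin n) ℝ) : Prop :=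
  ∀ μ ∈ spectrum ℂ (M.map Complex.ofReal), ‖μ‖ < 1

/-- Euclidean operator norm of a real matrix. -/
noncomputable def opNorm {p q : ℕ} (M : Matrix (Fin p) (Fin q) ℝ) : ℝ :=
  ‖LinearMap.toContinuousLinearMap (Matrix.toEuclideanLin M)‖

/-- Euclidean norm of a vector in `ℝ^n`. -/
noncomputable def evnorm {n : ℕ} (x : Fin n → ℝ) : ℝ :=
  ‖(WithLp.equiv 2 (Fin n → ℝ)).symm x‖

/-- `P_{K,γ} = Σ_t γ^t ((A+BK)^t)ᵀ (Q + KᵀRK) (A+BK)^t`, the solution of the discounted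
Lyapunov equation when `√γ (A+BK)` is stable. -/
noncomputable def lyapP {d m : ℕ} (A : Matrix (Fin d) (Fin d) ℝ) (B : Matrix (Fin d) (Fin m) ℝ)
    (Q : Matrix (Fin d) (Fin d) ℝ) (R : Matrix (Fin m) (Fin m) ℝ)
    (K : Matrix (Fin m) (Fin d) ℝ) (γ : ℝ) : Matrix (Fin d) (Fin d) ℝ :=
  ∑' t : ℕ, γ ^ t • (((A + B * K) ^ t)ᵀ * (Q + Kᵀ * R * K) * (A + B * K) ^ t)

lemma aux_trace_mul_le {p q r : ℕ} (L : Matrix (Fin p) (Fin q) ℝ) (Y : Matrix (Fin q) (Fin r) ℝ) :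
    ((L * Y)ᵀ * (L * Y)).trace ≤ (Lᵀ * L).trace * (Yᵀ * Y).trace := by
  have key : ∀ {a b : ℕ} (M : Matrix (Fin a) (Fin b) ℝ),
      (Mᵀ * M).trace = ∑ j, ∑ i, M i j ^ 2 := by
    intro a b M
    simp [Matrix.trace, Matrix.mul_apply, pow_two]
  rw [key, key, key, Finset.sum_comm (f := fun j i => L i j ^ 2)]
  rw [Finset.sum_comm, Finset.sum_mul_sum]
  refine Finset.sum_le_sum fun i _ => Finset.sum_le_sum fun j _ => ?_
  rw [Matrix.mul_apply]
  exact Finset.sum_mul_sq_le_sq_mul_sq _ _ _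

open scoped MatrixOrder in
lemma aux_sqrt {d : ℕ} (S : Matrix (Fin d) (Fin d) ℝ) (hS : S.PosSemidef) :
    ∃ L : Matrix (Fin d) (Fin d) ℝ, S = Lᴴ * L :=
  CStarAlgebra.nonneg_iff_eq_star_mul_self.mp hS.nonneg

lemma aux_main {d : ℕ} (X S : Matrix (Fin d) (Fin d) ℝ) (hS : (S - 1).PosSemidef)
    (γ : ℝ) (hγ : 0 < γ) (c : ℝ) (hc : 1 ≤ c) (H : ℕ) (hH : 4 * c ≤ (H : ℝ)) :
    min ((∑' t : ℕ, γ ^ t • ((X ^ t)ᵀ * S * X ^ t)).trace / 2) c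
      ≤ (∑ t ∈ Finset.range H, γ ^ t • ((X ^ t)ᵀ * S * X ^ t)).trace := by
  have hS' : S.PosSemidef := by
    have := hS.add (Matrix.PosSemidef.one (n := Fin d) (R := ℝ))
    simpa using this
  obtain ⟨L, hL⟩ := aux_sqrt S hS'
  rw [Matrix.conjTranspose_eq_transpose_of_trivial] at hL
  set F : ℕ → Matrix (Fin d) (Fin d) ℝ := fun t => γ ^ t • ((X ^ t)ᵀ * S * X ^ t) with hF
  set f : ℕ → ℝ := fun t => (F t).trace with hf
  have hfe : ∀ t, f t = γ ^ t * ((L * X ^ t)ᵀ * (L * X ^ t)).trace := by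
    intro t
    simp only [hf, hF, Matrix.trace_smul, smul_eq_mul, hL, Matrix.transpose_mul, Matrix.mul_assoc]
  have hnn : ∀ Y : Matrix (Fin d) (Fin d) ℝ, 0 ≤ (Yᵀ * Y).trace := by
    intro Y
    have := (Matrix.posSemidef_conjTranspose_mul_self Y).trace_nonneg
    rwa [Matrix.conjTranspose_eq_transpose_of_trivial] at this
  have hf0 : ∀ t, 0 ≤ f t := by
    intro t
    rw [hfe]
    exact mul_nonneg (pow_nonneg hγ.le _) (hnn _)
  have hlow : ∀ t, γ ^ t * ((X ^ t)ᵀ * X ^ t).trace ≤ f t := by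
    intro t
    have h1 := (hS.conjTranspose_mul_mul_same (X ^ t)).trace_nonneg
    rw [Matrix.conjTranspose_eq_transpose_of_trivial, Matrix.mul_sub, Matrix.sub_mul,
      Matrix.trace_sub, Matrix.mul_one] at h1
    simp only [hf, hF, Matrix.trace_smul, smul_eq_mul]
    exact mul_le_mul_of_nonneg_left (by linarith) (pow_nonneg hγ.le _)
  have hsub : ∀ t s, f (t + s) ≤ f t * f s := by
    intro t s
    calc f (t + s) = (γ ^ t * γ ^ s) * ((L * X ^ t * X ^ s)ᵀ * (L * X ^ t * X ^ s)).trace := by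
          rw [hfe, pow_add, pow_add, Matrix.mul_assoc L]
      _ ≤ (γ ^ t * γ ^ s) * (((L * X ^ t)ᵀ * (L * X ^ t)).trace * ((X ^ s)ᵀ * X ^ s).trace) :=
          mul_le_mul_of_nonneg_left (aux_trace_mul_le _ _) (by positivity)
      _ = f t * (γ ^ s * ((X ^ s)ᵀ * X ^ s).trace) := by rw [hfe]; ring
      _ ≤ f t * f s := mul_le_mul_of_nonneg_left (hlow s) (hf0 t)
  rw [Matrix.trace_sum]
  change _ ≤ ∑ t ∈ Finset.range H, f t
  have hsum0 : 0 ≤ ∑ t ∈ Finset.range H, f t := Finset.sum_nonneg fun t _ => hf0 t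
  by_cases hsm : Summable F
  swap
  · rw [tsum_eq_zero_of_not_summable hsm]
    refine (min_le_left _ _).trans ?_
    simpa using hsum0
  have hhs : HasSum f (∑' t, F t).trace :=
    hsm.hasSum.map (Matrix.traceAddMonoidHom (Fin d) ℝ) (continuous_id.matrix_trace)
  rw [← hhs.tsum_eq]
  by_cases hall : ∀ t ∈ Finset.range H, 1 / 4 ≤ f t
  · refine (min_le_right _ _).trans ?_
    have := Finset.card_nsmul_le_sum _ _ _ hall
    rw [Finset.card_range, nsmul_eq_mul] at this
    linarith
  · push Not at hall
    obtain ⟨s, hs, hs4⟩ := hall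
    refine (min_le_left _ _).trans ?_
    have hfs := hhs.summable
    have h1 := hfs.sum_add_tsum_nat_add s
    have h2 : ∑' t, f (t + s) ≤ ∑' t, f t * f s :=
      Summable.tsum_le_tsum (fun t => hsub t s) ((summable_nat_add_iff s).mpr hfs)
        (hfs.mul_right _)
    rw [tsum_mul_right] at h2
    have h3 : 0 ≤ ∑' t, f t := tsum_nonneg hf0
    have h4 : ∑ t ∈ Finset.range s, f t ≤ ∑ t ∈ Finset.range H, f t :=
      Finset.sum_le_sum_of_subset_of_nonneg
        (Finset.range_subset_range.mpr (Finset.mem_range.mp hs).le) fun t _ _ => hf0 t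
    nlinarith

/-- Finite-horizon lower bound: with `Q + KᵀRK ⪰ I` and `√γ(A+BK)` stable with value
matrix `P`, for any `c ≥ 1` and horizon `H ≥ 4c`, the finite-horizon value matrix `P_H`
satisfies `tr(P_H) ≥ min(tr(P)/2, c)`. -/
theorem finite_horizon_trace_lower_bound {d m : ℕ}
    (A : Matrix (Fin d) (Fin d) ℝ) (B : Matrix (Fin d) (Fin m) ℝ)
    (Q : Matrix (Fin d) (Fin d) ℝ) (R : Matrix (Fin m) (Fin m) ℝ)
    (K : Matrix (Fin m) (Fin d) ℝ)
    (hQK : (Q + Kᵀ * R * K - 1).PosSemidef)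
    (γ : ℝ) (hγ : γ ∈ Set.Ioc (0 : ℝ) 1)
    (hstab : IsStable (Real.sqrt γ • (A + B * K)))
    (c : ℝ) (hc : 1 ≤ c) (H : ℕ) (hH : 4 * c ≤ (H : ℝ)) :
    min ((lyapP A B Q R K γ).trace / 2) c
      ≤ (∑ t ∈ Finset.range H,
          γ ^ t • (((A + B * K) ^ t)ᵀ * (Q + Kᵀ * R * K) * (A + B * K) ^ t)).trace := by
  exact aux_main (A + B * K) (Q + Kᵀ * R * K) hQK γ hγ.1 c hc H hH
end

section
/- Suppose Q + KᵀRK ⪰ I and the matrix √γ·(A+BK) has some complex eigenvalue of modulus at least 1 (equivalently, spectral radius ≥ 1). Then for every horizon H ≥ 1, the finite-horizon value matrix P_H := Σ_{t=0}^{H−1} γ^t ((A+BK)^t)ᵀ (Q + KᵀRK) (A+BK)^t satisfies tr(P_H) ≥ H. -/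
open Matrix

section helper
attribute [local instance] Matrix.frobeniusNormedRing Matrix.frobeniusNormedAlgebra

lemma frob_aux {d : ℕ} (N : Matrix (Fin d) (Fin d) ℝ) (z : ℂ) (hz : 1 ≤ ‖z‖)
    (h : z ∈ spectrum ℂ (N.map Complex.ofReal)) : 1 ≤ (Nᵀ * N).trace := by
  by_contra! hlt
  have hsum : (Nᵀ * N).trace = ∑ i, ∑ j, ‖(N.map Complex.ofReal) i j‖ ^ (2:ℝ) := by
    rw [Finset.sum_comm]
    simp [Matrix.trace, Matrix.mul_apply, sq]
  have hn : ‖N.map Complex.ofReal‖ < 1 := by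
    rw [Matrix.frobenius_norm_def, ← hsum]
    apply Real.rpow_lt_one _ hlt (by norm_num)
    rw [hsum]; positivity
  have hz0 : z ≠ 0 := by
    rintro rfl
    norm_num at hz
  have hn2 : ‖z⁻¹ • N.map Complex.ofReal‖ < 1 := by
    rw [norm_smul, norm_inv]
    have : ‖z‖⁻¹ ≤ 1 := inv_le_one_of_one_le₀ hz
    nlinarith [norm_nonneg (N.map Complex.ofReal)]
  have hu := isUnit_one_sub_of_norm_lt_one hn2
  apply spectrum.mem_iff.1 h
  have e : algebraMap ℂ (Matrix (Fin d) (Fin d) ℂ) z - N.map Complex.ofReal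
      = (Units.mk0 z hz0) • (1 - z⁻¹ • N.map Complex.ofReal) := by
    rw [Units.smul_def, Units.val_mk0, smul_sub, smul_smul, mul_inv_cancel₀ hz0, one_smul,
      Algebra.algebraMap_eq_smul_one]
  rw [e]
  exact hu.smul _

end helper

/-- If `Q + KᵀRK ⪰ I` and `√γ(A+BK)` has a complex eigenvalue of modulus at least `1`,
then the finite-horizon value matrix `P_H` satisfies `tr(P_H) ≥ H` for every `H ≥ 1`. -/
theorem unstable_finite_horizon_trace_lower_bound {d m : ℕ}
    (A : Matrix (Fin d) (Fin d) ℝ) (B : Matrix (Fin d) (Fin m) ℝ)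
    (Q : Matrix (Fin d) (Fin d) ℝ) (R : Matrix (Fin m) (Fin m) ℝ)
    (K : Matrix (Fin m) (Fin d) ℝ)
    (hQK : (Q + Kᵀ * R * K - 1).PosSemidef)
    (γ : ℝ) (hγ : γ ∈ Set.Ioc (0 : ℝ) 1)
    (hunstab : ∃ μ ∈ spectrum ℂ ((Real.sqrt γ • (A + B * K)).map Complex.ofReal),
      1 ≤ ‖μ‖) :
    ∀ H : ℕ, 1 ≤ H →
      (H : ℝ) ≤ (∑ t ∈ Finset.range H,
          γ ^ t • (((A + B * K) ^ t)ᵀ * (Q + Kᵀ * R * K) * (A + B * K) ^ t)).trace := by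
  intro H _
  obtain ⟨z, hz, hz1⟩ := hunstab
  obtain ⟨hγ0, _⟩ := hγ
  rw [Matrix.trace_sum]
  have key : ∀ t ∈ Finset.range H, (1 : ℝ) ≤
      (γ ^ t • (((A + B * K) ^ t)ᵀ * (Q + Kᵀ * R * K) * (A + B * K) ^ t)).trace := by
    intro t _
    generalize Q + Kᵀ * R * K = S at *
    generalize A + B * K = M at *
    have h1 := spectrum.pow_mem_pow _ t hz
    have e1 : ((Real.sqrt γ • M).map Complex.ofReal) ^ t
        = ((Real.sqrt γ • M) ^ t).map Complex.ofReal :=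
      ((Complex.ofRealHom.mapMatrix (m := Fin d)).map_pow (Real.sqrt γ • M) t).symm
    rw [e1] at h1
    have h2 := frob_aux _ _ (by rw [norm_pow]; exact one_le_pow₀ hz1) h1
    rw [smul_pow, Matrix.transpose_smul, Matrix.smul_mul, Matrix.mul_smul, smul_smul,
      ← mul_pow, Real.mul_self_sqrt hγ0.le, Matrix.trace_smul, smul_eq_mul] at h2
    have h3 := (hQK.conjTranspose_mul_mul_same (M ^ t)).trace_nonneg
    rw [Matrix.conjTranspose_eq_transpose_of_trivial, Matrix.mul_sub, Matrix.sub_mul,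
      Matrix.trace_sub, Matrix.mul_one] at h3
    rw [Matrix.trace_smul, smul_eq_mul]
    refine h2.trans (mul_le_mul_of_nonneg_left ?_ (pow_nonneg hγ0.le t))
    linarith
  simpa using Finset.card_nsmul_le_sum (Finset.range H) _ 1 key
end

section
/- Let d ≥ 1 and let u and v be independent random vectors, each uniformly distributed on the unit sphere S^{d−1} ⊂ ℝ^d. Then Pr[ ⟨u, v⟩² ≥ 1/d ] ≥ 1/10. -/
open MeasureTheory RealInnerProductSpace

open ProbabilityTheory in
lemma gauss_small (r : ℝ) :
    gaussianReal 0 1 (Set.Icc (-r) r) ≤ ENNReal.ofReal (4 / 5 * r) := by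
  rw [gaussianReal_apply 0 one_ne_zero]
  calc ∫⁻ x in Set.Icc (-r) r, gaussianPDF 0 1 x
      ≤ ∫⁻ x in Set.Icc (-r) r, ENNReal.ofReal (2/5) := by
        refine lintegral_mono fun x => ?_
        refine ENNReal.ofReal_le_ofReal ?_
        rw [gaussianPDFReal]
        have h1 : Real.exp (-(x - 0) ^ 2 / (2 * ((1 : NNReal) : ℝ))) ≤ 1 := by
          apply Real.exp_le_one_iff.2
          have := sq_nonneg (x - 0)
          push_cast
          linarith
        have h2 : (5/2 : ℝ) ≤ √(2 * Real.pi * ((1 : NNReal) : ℝ)) := by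
          apply Real.le_sqrt_of_sq_le
          have := Real.pi_gt_d2
          push_cast
          nlinarith
        have h3 : (√(2 * Real.pi * ((1 : NNReal) : ℝ)))⁻¹ ≤ 2/5 := by
          rw [show (2/5 : ℝ) = (5/2)⁻¹ by norm_num]
          exact inv_anti₀ (by norm_num) h2
        calc _ ≤ (2/5 : ℝ) * 1 := mul_le_mul h3 h1 (Real.exp_pos _).le (by norm_num)
          _ = _ := by ring
    _ = ENNReal.ofReal (4 / 5 * r) := by
        rw [lintegral_const, Measure.restrict_apply_univ, Real.volume_Icc,
          ← ENNReal.ofReal_mul (by norm_num)]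
        congr 1; ring

lemma gauss_small' (n : ℝ) (hn : 0 < n) (S : ℝ) (hS : 0 ≤ S) :
    ProbabilityTheory.gaussianReal 0 1 {x | n * x ^ 2 < S} ≤
      ENNReal.ofReal (2 / 5 * (1 + S / n)) := by
  have hr : 0 ≤ S / n := by positivity
  refine le_trans (measure_mono ?_) ((gauss_small (√(S / n))).trans ?_)
  · intro x hx
    simp only [Set.mem_setOf_eq] at hx
    rw [Set.mem_Icc, ← abs_le]
    apply Real.abs_le_sqrt
    rw [le_div_iff₀ hn]
    linarith
  · apply ENNReal.ofReal_le_ofReal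
    nlinarith [sq_nonneg (√(S / n) - 1), Real.sq_sqrt hr]

open ProbabilityTheory in
lemma gauss_sq : ∫⁻ x, ENNReal.ofReal (x ^ 2) ∂(gaussianReal 0 1) = 1 := by
  have hm : MemLp (fun x : ℝ => x) 2 (gaussianReal 0 1) := memLp_id_gaussianReal 2
  rw [← ofReal_integral_eq_lintegral_ofReal hm.integrable_sq
    (Filter.Eventually.of_forall fun x => sq_nonneg x)]
  have h := variance_fun_id_gaussianReal (μ := 0) (v := 1)
  rw [variance_eq_integral (by fun_prop), integral_id_gaussianReal] at h
  simp at h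
  simp [h]

open ProbabilityTheory in
lemma pi_small (n : ℕ) :
    (Measure.pi fun _ : Fin (n + 1) => gaussianReal 0 1)
      {x | (n : ℝ) * x 0 ^ 2 < ∑ i : Fin n, x i.succ ^ 2} ≤ ENNReal.ofReal (4 / 5) := by
  rcases Nat.eq_zero_or_pos n with rfl | hn
  · simp
  have hn' : (0 : ℝ) < n := by exact_mod_cast hn
  have hmp := measurePreserving_piFinSuccAbove (fun _ : Fin (n + 1) => gaussianReal 0 1) 0
  set T : Set (ℝ × (Fin n → ℝ)) := {p | (n : ℝ) * p.1 ^ 2 < ∑ i : Fin n, p.2 i ^ 2} with hT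
  have hTm : MeasurableSet T := by
    apply measurableSet_lt <;> fun_prop
  have hpre : {x : Fin (n + 1) → ℝ | (n : ℝ) * x 0 ^ 2 < ∑ i : Fin n, x i.succ ^ 2}
      = (MeasurableEquiv.piFinSuccAbove (fun _ => ℝ) 0) ⁻¹' T := by
    ext x
    simp [hT, MeasurableEquiv.piFinSuccAbove, Fin.tail]
  rw [hpre, hmp.measure_preimage hTm.nullMeasurableSet, Measure.prod_apply_symm hTm]
  calc _ ≤ ∫⁻ y, ENNReal.ofReal (2 / 5) * (1 + ENNReal.ofReal (1 / n) *
            ∑ i, ENNReal.ofReal ((y i) ^ 2)) ∂(Measure.pi fun _ : Fin n => gaussianReal 0 1) := by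
        refine lintegral_mono fun y => ?_
        have hS : 0 ≤ ∑ i, y i ^ 2 := Finset.sum_nonneg fun i _ => sq_nonneg _
        refine (gauss_small' n hn' _ hS).trans (le_of_eq ?_)
        rw [ENNReal.ofReal_mul (by norm_num), ENNReal.ofReal_add (by norm_num) (by positivity),
          ENNReal.ofReal_one, div_eq_mul_one_div (∑ i, y i ^ 2), mul_comm (∑ i, y i ^ 2),
          ENNReal.ofReal_mul (by positivity), ENNReal.ofReal_sum_of_nonneg
          (fun i _ => sq_nonneg _)]
    _ = ENNReal.ofReal (2/5) * (1 + ENNReal.ofReal (1 / n) * n) := by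
        rw [lintegral_const_mul _ (by fun_prop), lintegral_add_left (by fun_prop),
          lintegral_const_mul _ (by fun_prop), lintegral_finsetSum _ (by fun_prop)]
        have : ∀ i : Fin n, ∫⁻ y, ENNReal.ofReal ((y i) ^ 2)
            ∂(Measure.pi fun _ : Fin n => gaussianReal 0 1) = 1 := fun i => by
          rw [← gauss_sq]
          exact (measurePreserving_eval (fun _ : Fin n => gaussianReal 0 1) i).lintegral_comp
            (f := fun x => ENNReal.ofReal (x ^ 2)) (by fun_prop)
        simp [this]
    _ ≤ ENNReal.ofReal (4/5) := by
        rw [← ENNReal.ofReal_natCast, ← ENNReal.ofReal_mul (by positivity),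
          one_div_mul_cancel hn'.ne', ENNReal.ofReal_one,
          ← ENNReal.ofReal_one, ← ENNReal.ofReal_add (by norm_num) (by norm_num),
          ← ENNReal.ofReal_mul (by norm_num)]
        apply ENNReal.ofReal_le_ofReal; norm_num

lemma exists_rot {E : Type*} [NormedAddCommGroup E] [InnerProductSpace ℝ E]
    [CompleteSpace E] (u v : E) (h : ‖u‖ = ‖v‖) : ∃ O : E ≃ₗᵢ[ℝ] E, O u = v :=
  ⟨_, Submodule.reflection_sub h⟩

open ProbabilityTheory in
lemma std_small (n : ℕ) (v : EuclideanSpace ℝ (Fin (n + 1))) (hv : ‖v‖ = 1) :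
    stdGaussian (EuclideanSpace ℝ (Fin (n + 1)))
      {g | ((n + 1 : ℕ) : ℝ) * ⟪g, v⟫ ^ 2 < ‖g‖ ^ 2} ≤ ENNReal.ofReal (4 / 5) := by
  set e : EuclideanSpace ℝ (Fin (n + 1)) := EuclideanSpace.single 0 1 with he
  obtain ⟨O, hO⟩ := exists_rot e v (by simp [he, hv])
  have hm : ∀ w : EuclideanSpace ℝ (Fin (n + 1)),
      MeasurableSet {g | ((n + 1 : ℕ) : ℝ) * ⟪g, w⟫ ^ 2 < ‖g‖ ^ 2} := fun w => by
    apply measurableSet_lt <;> fun_prop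
  rw [← stdGaussian_map O, Measure.map_apply O.continuous.measurable (hm v)]
  have : O ⁻¹' {g | ((n + 1 : ℕ) : ℝ) * ⟪g, v⟫ ^ 2 < ‖g‖ ^ 2}
      = {g | ((n + 1 : ℕ) : ℝ) * ⟪g, e⟫ ^ 2 < ‖g‖ ^ 2} := by
    ext g
    simp [← hO]
  rw [this, ← map_pi_eq_stdGaussian, Measure.map_apply (by fun_prop) (hm e)]
  refine le_trans (le_of_eq ?_) (pi_small n)
  congr 1
  ext x
  simp only [Set.mem_preimage, Set.mem_setOf_eq, EuclideanSpace.real_norm_sq_eq,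
    Fin.sum_univ_succ, he, EuclideanSpace.inner_single_right]
  push_cast
  simp
  constructor <;> intro h <;> linarith

open ProbabilityTheory in
lemma std_zero (n : ℕ) : stdGaussian (EuclideanSpace ℝ (Fin (n + 1))) {0} = 0 := by
  rw [← map_pi_eq_stdGaussian, Measure.map_apply (by fun_prop) (measurableSet_singleton _)]
  have h := (measurePreserving_eval (fun _ : Fin (n + 1) => gaussianReal 0 1) 0).measure_preimage
    (measurableSet_singleton (0 : ℝ)).nullMeasurableSet
  have := nullSingletonClass_gaussianReal (μ := 0) (v := 1) one_ne_zero
  rw [measure_singleton] at h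
  refine measure_mono_null ?_ h
  intro x hx
  simp at hx ⊢
  simp [hx]

/-- If `u` and `v` are independent and uniformly distributed on the unit sphere
`S^{d-1} ⊆ ℝ^d` (i.e. each has the rotation-invariant probability law supported on the
sphere), then `⟨u,v⟩² ≥ 1/d` with probability at least `1/10`. -/
theorem inner_sq_large_prob {d : ℕ} (hd : 1 ≤ d)
    (μ : Measure (EuclideanSpace ℝ (Fin d))) [IsProbabilityMeasure μ]
    (hsupp : μ (Metric.sphere (0 : EuclideanSpace ℝ (Fin d)) 1)ᶜ = 0)
    (hinv : ∀ O : EuclideanSpace ℝ (Fin d) ≃ₗᵢ[ℝ] EuclideanSpace ℝ (Fin d),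
      μ.map O = μ) :
    (1 : ENNReal) / 10
      ≤ (μ.prod μ) {p : EuclideanSpace ℝ (Fin d) × EuclideanSpace ℝ (Fin d) |
          1 / (d : ℝ) ≤ ⟪p.1, p.2⟫ ^ 2} := by
  obtain ⟨n, rfl⟩ : ∃ n, d = n + 1 := ⟨d - 1, by omega⟩
  have hd0 : (0 : ℝ) < ((n + 1 : ℕ) : ℝ) := by positivity
  have hsph : ∀ᵐ v ∂μ, ‖v‖ = 1 := by
    rw [ae_iff]
    convert hsupp using 2
    ext v
    simp
  set B : Set ((EuclideanSpace ℝ (Fin (n + 1))) × (EuclideanSpace ℝ (Fin (n + 1)))) := {p | ((n + 1 : ℕ) : ℝ) * ⟪p.1, p.2⟫ ^ 2 < ‖p.1‖ ^ 2} with hB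
  have hBm : MeasurableSet B := by
    apply measurableSet_lt <;> fun_prop
  set e : (EuclideanSpace ℝ (Fin (n + 1))) := EuclideanSpace.single 0 1 with he
  have hen : ‖e‖ = 1 := by simp [he]
  set q := μ (Prod.mk e ⁻¹' B) with hq
  have hconst : ∀ g : (EuclideanSpace ℝ (Fin (n + 1))), g ≠ 0 → μ (Prod.mk g ⁻¹' B) = q := by
    intro g hg
    have hg' : 0 < ‖g‖ := norm_pos_iff.2 hg
    obtain ⟨O, hO⟩ := exists_rot (‖g‖ • e) g (by simp [norm_smul, hen])
    rw [← hinv O, Measure.map_apply O.continuous.measurable (hBm.preimage (by fun_prop)), hq]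
    congr 1
    ext v
    have h1 : ⟪g, O v⟫ = ‖g‖ * ⟪e, v⟫ := by
      conv_lhs => rw [← hO]
      rw [O.inner_map_map, real_inner_smul_left]
    change ((n + 1 : ℕ) : ℝ) * ⟪g, O v⟫ ^ 2 < ‖g‖ ^ 2 ↔ ((n + 1 : ℕ) : ℝ) * ⟪e, v⟫ ^ 2 < ‖e‖ ^ 2
    rw [h1, hen]
    rw [show ((n + 1 : ℕ) : ℝ) * (‖g‖ * ⟪e, v⟫) ^ 2 = ‖g‖ ^ 2 * (((n + 1 : ℕ) : ℝ) * ⟪e, v⟫ ^ 2) by ring]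
    rw [one_pow]
    exact mul_lt_iff_lt_one_right (by positivity)
  have hq1 : (μ.prod μ) B = q := by
    rw [Measure.prod_apply hBm]
    have : ∀ᵐ g ∂μ, μ (Prod.mk g ⁻¹' B) = q := by
      filter_upwards [hsph] with g hg
      exact hconst g (norm_ne_zero_iff.1 (by rw [hg]; exact one_ne_zero))
    rw [lintegral_congr_ae this]
    simp
  have hq2 : ((ProbabilityTheory.stdGaussian (EuclideanSpace ℝ (Fin (n + 1)))).prod μ) B = q := by
    rw [Measure.prod_apply hBm]
    have : ∀ᵐ g ∂(ProbabilityTheory.stdGaussian (EuclideanSpace ℝ (Fin (n + 1)))), μ (Prod.mk g ⁻¹' B) = q := by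
      have h0 : ∀ᵐ g ∂(ProbabilityTheory.stdGaussian (EuclideanSpace ℝ (Fin (n + 1)))), g ≠ 0 := by
        rw [ae_iff]
        simpa using std_zero n
      filter_upwards [h0] with g hg
      exact hconst g hg
    rw [lintegral_congr_ae this]
    simp
  have hq3 : q ≤ ENNReal.ofReal (4 / 5) := by
    rw [← hq2, Measure.prod_apply_symm hBm]
    calc _ ≤ ∫⁻ _, ENNReal.ofReal (4 / 5) ∂μ := by
          refine lintegral_mono_ae ?_
          filter_upwards [hsph] with v hv
          exact std_small n v hv
      _ = _ := by simp
  have hcompl : (μ.prod μ) Bᶜ = 1 - q := by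
    rw [prob_compl_eq_one_sub hBm, hq1]
  have hsub : (μ.prod μ) Bᶜ ≤ (μ.prod μ) {p : (EuclideanSpace ℝ (Fin (n + 1))) × (EuclideanSpace ℝ (Fin (n + 1))) | 1 / ((n + 1 : ℕ) : ℝ) ≤ ⟪p.1, p.2⟫ ^ 2} := by
    refine measure_mono_ae ?_
    have : ∀ᵐ p ∂(μ.prod μ), ‖p.1‖ = 1 := Measure.quasiMeasurePreserving_fst.ae hsph
    filter_upwards [this] with p hp hpB
    have hpB' : ¬ (((n + 1 : ℕ) : ℝ) * ⟪p.1, p.2⟫ ^ 2 < ‖p.1‖ ^ 2) := hpB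
    rw [hp, not_lt] at hpB'
    change 1 / ((n + 1 : ℕ) : ℝ) ≤ ⟪p.1, p.2⟫ ^ 2
    rw [div_le_iff₀ hd0]
    linarith
  refine le_trans ?_ hsub
  rw [hcompl]
  refine le_trans ?_ (tsub_le_tsub_left hq3 1)
  rw [← ENNReal.ofReal_one, ← ENNReal.ofReal_sub _ (by norm_num),
    show (10 : ENNReal) = ENNReal.ofReal 10 by simp, ← ENNReal.ofReal_div_of_pos (by norm_num)]
  apply ENNReal.ofReal_le_ofReal
  norm_num
end

section
/- Let d ≥ 1 and let M ∈ ℝ^{d×d} be a symmetric positive semidefinite matrix. If x is a random vector uniformly distributed on the Euclidean sphere of radius √d in ℝ^d, then Pr[ xᵀ M x ≥ tr(M)/d ] ≥ 1/10. -/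
open MeasureTheory RealInnerProductSpace Matrix

section helpers
variable {d : ℕ} {μ : Measure (EuclideanSpace ℝ (Fin d))} [IsProbabilityMeasure μ]

lemma qf_ae (hsupp : μ (Metric.sphere (0 : EuclideanSpace ℝ (Fin d)) (Real.sqrt d))ᶜ = 0) :
    ∀ᵐ x ∂μ, x ∈ Metric.sphere (0 : EuclideanSpace ℝ (Fin d)) (Real.sqrt d) := hsupp

lemma qf_int (hsupp : μ (Metric.sphere (0 : EuclideanSpace ℝ (Fin d)) (Real.sqrt d))ᶜ = 0)
    (f : EuclideanSpace ℝ (Fin d) → ℝ) (hf : Continuous f) : Integrable f μ := by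
  obtain ⟨C, hC⟩ := (isCompact_sphere (0 : EuclideanSpace ℝ (Fin d)) (Real.sqrt d)).exists_bound_of_continuousOn hf.continuousOn
  refine Integrable.of_bound hf.aestronglyMeasurable C ?_
  filter_upwards [qf_ae hsupp] with x hx using hC x hx

lemma qf_rot (hinv : ∀ O : EuclideanSpace ℝ (Fin d) ≃ₗᵢ[ℝ] EuclideanSpace ℝ (Fin d),
      μ.map O = μ) (u v : EuclideanSpace ℝ (Fin d)) (h : ‖u‖ = ‖v‖) (k : ℕ) :
    ∫ x, ⟪u, x⟫ ^ k ∂μ = ∫ x, ⟪v, x⟫ ^ k ∂μ := by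
  have hO := Submodule.reflection_sub h
  set O := (ℝ ∙ (u - v))ᗮ.reflection
  have hc : Continuous (fun x => ⟪v, x⟫ ^ k) := by fun_prop
  conv_rhs => rw [← hinv O]
  rw [integral_map O.continuous.aemeasurable hc.aestronglyMeasurable]
  simp_rw [← hO, O.inner_map_map]

lemma qf_moments (hd : 1 ≤ d)
    (hsupp : μ (Metric.sphere (0 : EuclideanSpace ℝ (Fin d)) (Real.sqrt d))ᶜ = 0)
    (hinv : ∀ O : EuclideanSpace ℝ (Fin d) ≃ₗᵢ[ℝ] EuclideanSpace ℝ (Fin d),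
      μ.map O = μ) (b : OrthonormalBasis (Fin d) ℝ (EuclideanSpace ℝ (Fin d))) :
    (∀ i, ∫ x, ⟪b i, x⟫ ^ 2 ∂μ = 1) ∧
    (∀ i j, ∫ x, ⟪b i, x⟫ ^ 2 * ⟪b j, x⟫ ^ 2 ∂μ ≤ 3 * d / (d + 2)) := by
  have hd0 : (0 : ℝ) < d := by exact_mod_cast hd
  have hsum : ∀ᵐ x ∂μ, ∑ i, ⟪b i, x⟫ ^ 2 = (d : ℝ) := by
    filter_upwards [qf_ae hsupp] with x hx
    have h1 := b.sum_sq_norm_inner_right x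
    simp only [mem_sphere_iff_norm, sub_zero] at hx
    rw [hx, Real.sq_sqrt hd0.le] at h1
    simpa using h1
  let i0 : Fin d := ⟨0, hd⟩
  have hk : ∀ k i, ∫ x, ⟪b i, x⟫ ^ k ∂μ = ∫ x, ⟪b i0, x⟫ ^ k ∂μ := fun k i =>
    qf_rot hinv _ _ (by simp) k
  constructor
  · have h2 : ∫ x, ∑ i, ⟪b i, x⟫ ^ 2 ∂μ = d := by
      rw [integral_congr_ae hsum]; simp
    rw [integral_finsetSum _ (fun i _ => qf_int hsupp _ (by fun_prop))] at h2
    simp only [hk 2, Finset.sum_const, Finset.card_univ, Fintype.card_fin, nsmul_eq_mul] at h2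
    intro i
    rw [hk 2]
    exact mul_left_cancel₀ hd0.ne' (by linarith)
  · set a := ∫ x, ⟪b i0, x⟫ ^ 4 ∂μ with ha
    have hii : ∀ i, ∫ x, ⟪b i, x⟫ ^ 2 * ⟪b i, x⟫ ^ 2 ∂μ = a := by
      intro i
      rw [ha, ← hk 4 i]
      congr 1; ext x; ring
    have hij : ∀ i j, i ≠ j → ∫ x, ⟪b i, x⟫ ^ 2 * ⟪b j, x⟫ ^ 2 ∂μ = a / 3 := by
      intro i j hne
      have hor : ⟪b i, b j⟫ = 0 := b.inner_eq_zero hne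
      have hn1 : ‖b i + b j‖ = ‖(√2 : ℝ) • b i0‖ := by
        rw [← sq_eq_sq₀ (norm_nonneg _) (norm_nonneg _), @norm_add_sq_real, hor, norm_smul]
        simp; norm_num
      have hn2 : ‖b i - b j‖ = ‖(√2 : ℝ) • b i0‖ := by
        rw [← sq_eq_sq₀ (norm_nonneg _) (norm_nonneg _), @norm_sub_sq_real, hor, norm_smul]
        simp; norm_num
      have h4 : ∫ x, ⟪(√2 : ℝ) • b i0, x⟫ ^ 4 ∂μ = 4 * a := by
        rw [ha, ← integral_const_mul]
        congr 1; ext x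
        rw [real_inner_smul_left, mul_pow]
        have : (√2 : ℝ) ^ 4 = 4 := by
          rw [show (4 : ℕ) = 2 * 2 from rfl, pow_mul, Real.sq_sqrt (by norm_num)]; norm_num
        rw [this]
      have h5 := (qf_rot hinv _ _ hn1 4).trans h4
      have h6 := (qf_rot hinv _ _ hn2 4).trans h4
      have h7 : ∫ x, (⟪b i + b j, x⟫ ^ 4 + ⟪b i - b j, x⟫ ^ 4) ∂μ = 8 * a := by
        rw [integral_add (qf_int hsupp _ (by fun_prop)) (qf_int hsupp _ (by fun_prop)), h5, h6]
        ring
      have h8 : ∫ x, (⟪b i + b j, x⟫ ^ 4 + ⟪b i - b j, x⟫ ^ 4) ∂μ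
          = 2 * a + 2 * a + 12 * ∫ x, ⟪b i, x⟫ ^ 2 * ⟪b j, x⟫ ^ 2 ∂μ := by
        have e1 := hk 4 i
        have e2 := hk 4 j
        rw [← ha] at e1 e2
        nth_rewrite 1 [← e1]
        rw [← e2, ← integral_const_mul, ← integral_const_mul, ← integral_const_mul,
          ← integral_add (qf_int hsupp _ (by fun_prop)) (qf_int hsupp _ (by fun_prop)),
          ← integral_add (qf_int hsupp _ (by fun_prop)) (qf_int hsupp _ (by fun_prop))]
        congr 1; ext x
        rw [inner_add_left, inner_sub_left]; ring
      linarith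
    have hS : ∫ x, ∑ i, ∑ j, ⟪b i, x⟫ ^ 2 * ⟪b j, x⟫ ^ 2 ∂μ = (d : ℝ) * d := by
      have : ∀ᵐ x ∂μ, ∑ i, ∑ j, ⟪b i, x⟫ ^ 2 * ⟪b j, x⟫ ^ 2 = (d : ℝ) * d := by
        filter_upwards [hsum] with x hx
        rw [← Finset.sum_mul_sum, hx]
      rw [integral_congr_ae this]; simp
    rw [integral_finsetSum _ (fun i _ => qf_int hsupp _ (by fun_prop))] at hS
    have hrow : ∀ i, ∫ x, ∑ j, ⟪b i, x⟫ ^ 2 * ⟪b j, x⟫ ^ 2 ∂μ = d * (a / 3) + 2 * a / 3 := by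
      intro i
      rw [integral_finsetSum _ (fun i _ => qf_int hsupp _ (by fun_prop))]
      have : ∀ j, ∫ x, ⟪b i, x⟫ ^ 2 * ⟪b j, x⟫ ^ 2 ∂μ = a / 3 + if i = j then 2 * a / 3 else 0 := by
        intro j
        split_ifs with h
        · subst h; rw [hii]; ring
        · rw [hij i j h]; ring
      simp_rw [this, Finset.sum_add_distrib]
      simp
    simp only [hrow, Finset.sum_const, Finset.card_univ, Fintype.card_fin, nsmul_eq_mul] at hS
    have hS2 := mul_left_cancel₀ hd0.ne' hS
    have haa : a = 3 * d / (d + 2) := by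
      rw [eq_div_iff (by positivity)]; linarith
    have ha0 : 0 ≤ a := by rw [haa]; positivity
    intro i j
    rw [← haa]
    by_cases h : i = j
    · subst h; rw [hii]
    · rw [hij i j h]; linarith

lemma qf_pz (l : Fin d → ℝ) (hl : ∀ i, 0 ≤ l i) (hd : 1 ≤ d)
    (hsupp : μ (Metric.sphere (0 : EuclideanSpace ℝ (Fin d)) (Real.sqrt d))ᶜ = 0)
    (hinv : ∀ O : EuclideanSpace ℝ (Fin d) ≃ₗᵢ[ℝ] EuclideanSpace ℝ (Fin d),
      μ.map O = μ) (b : OrthonormalBasis (Fin d) ℝ (EuclideanSpace ℝ (Fin d))) :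
    1 / 10 ≤ μ.real {x | (∑ i, l i) / (d : ℝ) ≤ ∑ i, l i * ⟪b i, x⟫ ^ 2} := by
  obtain ⟨hm2, hm4⟩ := qf_moments hd hsupp hinv b
  set T := ∑ i, l i with hT
  set Z : EuclideanSpace ℝ (Fin d) → ℝ := fun x => ∑ i, l i * ⟪b i, x⟫ ^ 2 with hZ
  have hZc : Continuous Z := by fun_prop
  have hZ0 : ∀ x, 0 ≤ Z x := fun x => Finset.sum_nonneg fun i _ => mul_nonneg (hl i) (sq_nonneg _)
  have hT0 : 0 ≤ T := Finset.sum_nonneg fun i _ => hl i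
  have hone : (∀ᵐ x ∂μ, T / d ≤ Z x) → 1 / 10 ≤ μ.real {x | T / (d : ℝ) ≤ Z x} := by
    intro h
    have : μ {x | T / (d : ℝ) ≤ Z x} = 1 := (prob_compl_eq_zero_iff (isClosed_le continuous_const hZc).measurableSet).1 h
    rw [measureReal_def, this]; norm_num
  rcases hT0.eq_or_lt with hT1 | hT1
  · apply hone
    rw [← hT1]; simp [hZ0]
  rcases hd.eq_or_lt with hd1 | hd1
  · apply hone
    subst hd1
    filter_upwards [qf_ae hsupp] with x hx
    have h1 := b.sum_sq_norm_inner_right x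
    simp only [mem_sphere_iff_norm, sub_zero] at hx
    rw [hx] at h1
    simp at h1
    rcases h1 with h1 | h1 <;> simp [hT, hZ, h1]
  have hEZ : ∫ x, Z x ∂μ = T := by
    simp only [hZ]
    rw [integral_finsetSum _ (fun i _ => qf_int hsupp _ (by fun_prop))]
    simp [integral_const_mul, hm2, hT]
  have hEZ2 : ∫ x, Z x ^ 2 ∂μ ≤ (3 * d / (d + 2)) * T ^ 2 := by
    have : ∀ x, Z x ^ 2 = ∑ i, ∑ j, (l i * l j) * (⟪b i, x⟫ ^ 2 * ⟪b j, x⟫ ^ 2) := by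
      intro x
      simp only [hZ]
      rw [sq, Finset.sum_mul_sum]
      refine Finset.sum_congr rfl fun i _ => Finset.sum_congr rfl fun j _ => by ring
    simp_rw [this]
    rw [integral_finsetSum _ (fun i _ => qf_int hsupp _ (by fun_prop))]
    rw [sq, hT, Finset.sum_mul_sum, Finset.mul_sum]
    refine Finset.sum_le_sum fun i _ => ?_
    rw [integral_finsetSum _ (fun i _ => qf_int hsupp _ (by fun_prop)), Finset.mul_sum]
    refine Finset.sum_le_sum fun j _ => ?_
    rw [integral_const_mul, mul_comm]
    exact mul_le_mul_of_nonneg_right (hm4 i j) (mul_nonneg (hl i) (hl j))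
  set A := {x | T / (d : ℝ) ≤ Z x} with hA
  have hAm : MeasurableSet A := (isClosed_le continuous_const hZc).measurableSet
  have hdr : (2 : ℝ) ≤ d := by exact_mod_cast hd1
  obtain ⟨e, he0, he⟩ : ∃ e : ℝ, 0 ≤ e ∧ (d : ℝ) = e + 2 := ⟨d - 2, by linarith, by ring⟩
  -- pointwise bound
  have hpt : ∀ c : ℝ, 0 < c → T ≤ T / d + (3 * d / (d + 2)) * T ^ 2 / (2 * c) + c / 2 * μ.real A := by
    intro c hc
    have hle : ∀ x, Z x ≤ (T / d + (1 / (2 * c)) * Z x ^ 2) + c / 2 * A.indicator (fun _ => (1 : ℝ)) x := by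
      intro x
      by_cases hx : x ∈ A
      · rw [Set.indicator_of_mem hx]
        have h1 : 0 ≤ T / d := by positivity
        have h2 : Z x ≤ (1 / (2 * c)) * Z x ^ 2 + c / 2 := by
          have : (1 / (2 * c)) * Z x ^ 2 + c / 2 - Z x = (Z x - c) ^ 2 / (2 * c) := by
            field_simp; ring
          have h3 : 0 ≤ (Z x - c) ^ 2 / (2 * c) := by positivity
          linarith
        linarith
      · rw [Set.indicator_of_notMem hx]
        have h1 : Z x < T / d := not_le.1 hx
        have : 0 ≤ (1 / (2 * c)) * Z x ^ 2 := by positivity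
        linarith
    have i1 : Integrable (fun x => T / d + (1 / (2 * c)) * Z x ^ 2) μ := qf_int hsupp _ (by fun_prop)
    have i2 : Integrable (fun x => c / 2 * A.indicator (fun _ => (1 : ℝ)) x) μ :=
      ((integrable_const (1 : ℝ)).indicator hAm).const_mul _
    have hI := integral_mono (qf_int hsupp Z hZc) (i1.add i2) hle
    simp only [Pi.add_apply] at hI
    rw [hEZ, integral_add i1 i2, integral_add (integrable_const _) (qf_int hsupp _ (by fun_prop)),
      integral_const_mul, integral_const_mul, integral_indicator hAm] at hI
    simp at hI
    have h3 : c⁻¹ * 2⁻¹ * ∫ x, Z x ^ 2 ∂μ ≤ c⁻¹ * 2⁻¹ * ((3 * d / (d + 2)) * T ^ 2) :=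
      mul_le_mul_of_nonneg_left hEZ2 (by positivity)
    have h4 : (3 * d / (d + 2)) * T ^ 2 / (2 * c) = c⁻¹ * 2⁻¹ * ((3 * d / (d + 2)) * T ^ 2) := by
      field_simp
    linarith
  have hfin := hpt ((3 * d / (d + 2)) * (d / (d - 1)) * T)
    (by rw [he, show e + 2 - 1 = e + 1 by ring]; positivity)
  set P := μ.real A
  rw [he, show e + 2 - 1 = e + 1 by ring] at hfin
  have key : (e + 1) ^ 2 * (e + 4) ≤ 3 * (e + 2) ^ 3 * P := by
    have e1 : T / (e + 2) + (3 * (e + 2) / (e + 2 + 2)) * T ^ 2 / (2 * ((3 * (e + 2) / (e + 2 + 2)) * ((e + 2) / (e + 1)) * T))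
      = T - T * (e + 1) / (2 * (e + 2)) := by
      field_simp; ring
    rw [e1] at hfin
    have h5 : T * (e + 1) / (2 * (e + 2)) ≤ (3 * (e + 2) / (e + 2 + 2)) * ((e + 2) / (e + 1)) * T / 2 * P := by
      linarith
    have h6 := mul_le_mul_of_nonneg_left h5 (show 0 ≤ 2 * (e + 2) * (e + 1) * (e + 4) / T by positivity)
    have h8 : 2 * (e + 2) * (e + 1) * (e + 4) / T * (T * (e + 1) / (2 * (e + 2)))
        = (e + 1) ^ 2 * (e + 4) := by
      field_simp
    have h9 : 2 * (e + 2) * (e + 1) * (e + 4) / T *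
        (3 * (e + 2) / (e + 2 + 2) * ((e + 2) / (e + 1)) * T / 2 * P) = 3 * (e + 2) ^ 3 * P := by
      rw [show e + 2 + 2 = e + 4 by ring]
      field_simp
    rwa [h8, h9] at h6
  by_contra hcon
  push Not at hcon
  have h7 : 3 * (e + 2) ^ 3 * P < 3 * (e + 2) ^ 3 * (1 / 10) :=
    mul_lt_mul_of_pos_left hcon (by positivity)
  nlinarith [pow_nonneg he0 3, pow_nonneg he0 2]

end helpers

/-- If `M ⪰ 0` and `x` is uniformly distributed on the sphere of radius `√d` in `ℝ^d`
(i.e. its law is the rotation-invariant probability measure supported on that sphere),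
then `xᵀMx ≥ tr(M)/d` with probability at least `1/10`. -/
theorem quadratic_form_large_prob {d : ℕ} (hd : 1 ≤ d)
    (M : Matrix (Fin d) (Fin d) ℝ) (hM : M.PosSemidef)
    (μ : Measure (EuclideanSpace ℝ (Fin d))) [IsProbabilityMeasure μ]
    (hsupp : μ (Metric.sphere (0 : EuclideanSpace ℝ (Fin d)) (Real.sqrt d))ᶜ = 0)
    (hinv : ∀ O : EuclideanSpace ℝ (Fin d) ≃ₗᵢ[ℝ] EuclideanSpace ℝ (Fin d),
      μ.map O = μ) :
    (1 : ENNReal) / 10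
      ≤ μ {x : EuclideanSpace ℝ (Fin d) |
          M.trace / (d : ℝ) ≤ ⟪x, Matrix.toEuclideanLin M x⟫} := by
  have hH := hM.isHermitian
  have htr : M.trace = ∑ i, hH.eigenvalues i := by
    simpa using hH.trace_eq_sum_eigenvalues
  have hq : ∀ x : EuclideanSpace ℝ (Fin d), ⟪x, Matrix.toEuclideanLin M x⟫
      = ∑ i, hH.eigenvalues i * ⟪hH.eigenvectorBasis i, x⟫ ^ 2 := by
    intro x
    rw [← hH.eigenvectorBasis.sum_inner_mul_inner]
    refine Finset.sum_congr rfl fun i _ => ?_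
    have hs := (Matrix.isSymmetric_toEuclideanLin_iff.2 hH) (hH.eigenvectorBasis i) x
    have hv : Matrix.toEuclideanLin M (hH.eigenvectorBasis i)
        = hH.eigenvalues i • hH.eigenvectorBasis i := by
      ext j
      have := congrFun (hH.mulVec_eigenvectorBasis i) j
      simpa [Matrix.toLpLin_apply] using this
    rw [← hs, hv, real_inner_smul_left, real_inner_comm]
    ring
  have h := qf_pz hH.eigenvalues hM.eigenvalues_nonneg hd hsupp hinv hH.eigenvectorBasis
  simp_rw [htr, hq]
  rw [measureReal_def, ← ENNReal.ofReal_le_iff_le_toReal (measure_ne_top _ _)] at h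
  refine le_trans (le_of_eq ?_) h
  rw [ENNReal.ofReal_div_of_pos (by norm_num)]
  simp
end
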